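/- There exist 8 mutually orthogonal Latin squares of order 63; that is, N(63) ≥ 8. -/

import Mathlib

/-- A Latin square of order `n`: every row map and every column map is a bijection. -/
def IsLatinSquare {n : ℕ} (L : Fin n → Fin n → Fin n) : Prop :=
  (∀ i, Function.Bijective fun j => L i j) ∧ (∀ j, Function.Bijective fun i => L i j)

/-- Two squares are orthogonal if the superposition map is injective. -/
def IsOrthogonal {n : ℕ} (L₁ L₂ : Fin n → Fin n → Fin n) : Prop :=
  Function.Injective fun p : Fin n × Fin n => (L₁ p.1 p.2, L₂ p.1 p.2)

/-!
Let `N` be a normal subgroup of a finite group `E`, and let `B₁, …, B_t` be transversals of `N`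
whose differences `-x + y`, with `x ≠ y` in the same `B_i`, are pairwise distinct. The translates of
the `B_i` meet each coset of `N` once, and two points from different cosets lie on at most one of
them. Since `N` permutes the translates semiregularly, they are encoded by a difference matrix over
`N` with one row per coset of `N`, and a difference matrix with `m + 1` rows gives `m` mutually
orthogonal Latin squares. For order 63 the group is `E = (ℤ₆₃ ⋊ ℤ₃) × ℤ₃` and there are seven base
blocks of size `|E / N| = 9`, whose `7 · 9 · 8 = 504` differences are exactly the elements of `E`
outside `N`.
-/

open Function

/-- A family of mutually orthogonal Latin squares (MOLS) of order `n`, indexed by `ι`. -/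
def IsMOLS {ι : Type*} {n : ℕ} (L : ι → Fin n → Fin n → Fin n) : Prop :=
  (∀ k, IsLatinSquare (L k)) ∧ ∀ k k', k ≠ k' → IsOrthogonal (L k) (L k')

theorem IsMOLS.comp_injective {ι κ : Type*} {n : ℕ} {L : ι → Fin n → Fin n → Fin n}
    (hL : IsMOLS L) {e : κ → ι} (he : Injective e) : IsMOLS (L ∘ e) :=
  ⟨fun k => hL.1 (e k), fun _ _ hk => hL.2 _ _ (he.ne hk)⟩

section DifferenceMatrix

variable {R C G : Type*} [AddGroup G] {n : ℕ}

/-- A difference matrix over a possibly non-commutative group `G`, with rows `R` and columns `C`: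
the differences of any two rows are pairwise distinct. When `C` and `G` have the same finite
cardinality, every element of `G` is then a difference of any two rows exactly once. -/
def IsDifferenceMatrix (D : R → C → G) : Prop :=
  Pairwise fun r s => Injective fun c => -D r c + D s c

/-- The square with rows `C` and columns and symbols `G` whose row `c` is the translation
`g ↦ g + d c`, written as a square on `Fin n` by means of the numberings `rows` and `elems`. -/
def translateSquare (rows : Fin n ≃ C) (elems : Fin n ≃ G) (d : C → G) (i j : Fin n) : Fin n :=
  elems.symm (elems j + d (rows i))

theorem isLatinSquare_translateSquare (rows : Fin n ≃ C) (elems : Fin n ≃ G) {d : C → G}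
    (hd : Injective d) : IsLatinSquare (translateSquare rows elems d) := by
  refine ⟨fun i => ?_, fun j => Finite.injective_iff_bijective.mp ?_⟩
  · exact elems.symm.bijective.comp ((AddGroup.addRight_bijective _).comp elems.bijective)
  · exact elems.symm.injective.comp ((add_right_injective _).comp (hd.comp rows.injective))

theorem isOrthogonal_translateSquare (rows : Fin n ≃ C) (elems : Fin n ≃ G) {d d' : C → G}
    (h : Injective fun c => -d c + d' c) :
    IsOrthogonal (translateSquare rows elems d) (translateSquare rows elems d') := by
  rintro ⟨i, j⟩ ⟨i', j'⟩ hij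
  obtain ⟨hd, hd'⟩ : elems j + d (rows i) = elems j' + d (rows i') ∧
      elems j + d' (rows i) = elems j' + d' (rows i') := by
    simpa [translateSquare] using hij
  have hdiff : -d (rows i) + d' (rows i) = -d (rows i') + d' (rows i') :=
    calc -d (rows i) + d' (rows i) = -(elems j + d (rows i)) + (elems j + d' (rows i)) := by
          simp [add_assoc]
      _ = -(elems j' + d (rows i')) + (elems j' + d' (rows i')) := by rw [hd, hd']
      _ = -d (rows i') + d' (rows i') := by simp [add_assoc]
  obtain rfl : i = i' := rows.injective (h hdiff)
  obtain rfl : j = j' := elems.injective (add_right_cancel hd)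
  rfl

/-- Normalizing the row `r₀` to zero turns every other row into a Latin square. -/
theorem IsDifferenceMatrix.isMOLS {D : R → C → G} (hD : IsDifferenceMatrix D) (r₀ : R)
    (rows : Fin n ≃ C) (elems : Fin n ≃ G) :
    IsMOLS fun r : {r // r ≠ r₀} => translateSquare rows elems fun c => -D r₀ c + D r c := by
  refine ⟨fun r => isLatinSquare_translateSquare rows elems (hD r.2.symm),
    fun r s hrs => isOrthogonal_translateSquare rows elems ?_⟩
  simpa [add_assoc] using hD (Subtype.coe_ne_coe.mpr hrs)

theorem IsDifferenceMatrix.exists_isMOLS {D : R → C → G} (hD : IsDifferenceMatrix D)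
    [Finite C] [Finite G] {m : ℕ} (hR : Nat.card R = m + 1) (hC : Nat.card C = n)
    (hG : Nat.card G = n) : ∃ L : Fin m → Fin n → Fin n → Fin n, IsMOLS L := by
  have : Finite R := Nat.finite_of_card_ne_zero (by omega)
  let row : Fin (m + 1) ≃ R := (Finite.equivFinOfCardEq hR).symm
  have hrow : Injective fun k : Fin m =>
      (⟨row k.succ, row.injective.ne k.succ_ne_zero⟩ : {r // r ≠ row 0}) := fun k l hkl =>
    Fin.succ_injective m (row.injective (congrArg Subtype.val hkl))
  exact ⟨_, (hD.isMOLS (row 0) (Finite.equivFinOfCardEq hC).symm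
    (Finite.equivFinOfCardEq hG).symm).comp_injective hrow⟩

end DifferenceMatrix

section DifferenceFamily

variable {E H I : Type*} [AddGroup E] [AddGroup H]

/-- A difference family in `E` relative to the kernel of `f`, all of whose base blocks `B i` are
transversals of that kernel: `B i h` is the point of `B i` in the fibre over `h`, and the
differences of distinct points of a common block are pairwise distinct. Only differences over the
same `k` are compared in `injective_sub`, since the others have different images under `f`. -/
structure IsTransversalDifferenceFamily (f : E →+ H) (B : I → H → E) : Prop where
  map_block : ∀ i h, f (B i h) = h
  injective_sub : ∀ k ≠ 0, Injective fun c : I × H => -B c.1 c.2 + B c.1 (c.2 + k)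

namespace IsTransversalDifferenceFamily

variable {f : E →+ H} {B : I → H → E}

theorem surjective [Nonempty I] (hB : IsTransversalDifferenceFamily f B) : Surjective f :=
  fun h => ⟨B (Classical.arbitrary I) h, hB.map_block _ h⟩

/-- The difference matrix over `f.ker` whose columns encode representatives, modulo `f.ker`, of the
translates of the base blocks. The entry in row `k` and column `(i, h)` is the point over `k` of the
translate of `B i` by `-B i₀ h`, carried into the kernel by the representative `B i₀ k` of its
coset. -/
def differenceMatrix (hB : IsTransversalDifferenceFamily f B) (i₀ : I) (k : H) (c : I × H) :
    f.ker :=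
  ⟨-B i₀ c.2 + B c.1 (c.2 + k) - B i₀ k, by simp [AddMonoidHom.mem_ker, hB.map_block]⟩

theorem isDifferenceMatrix (hB : IsTransversalDifferenceFamily f B) (i₀ : I) :
    IsDifferenceMatrix (hB.differenceMatrix i₀) := by
  rintro k l hkl ⟨i, h⟩ ⟨j, h'⟩ heq
  have hval (c : I × H) : (↑(-hB.differenceMatrix i₀ k c + hB.differenceMatrix i₀ l c) : E) =
      B i₀ k + (-B c.1 (c.2 + k) + B c.1 (c.2 + k + (-k + l))) - B i₀ l := by
    simp [differenceMatrix, sub_eq_add_neg, add_assoc]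
  have hsub : -B i (h + k) + B i (h + k + (-k + l)) =
      -B j (h' + k) + B j (h' + k + (-k + l)) := by
    have hcoe := congrArg Subtype.val heq
    rw [hval, hval] at hcoe
    exact add_left_cancel (sub_left_injective hcoe)
  have hpoint : (i, h + k) = (j, h' + k) :=
    hB.injective_sub (-k + l) (by rwa [ne_eq, neg_add_eq_zero]) hsub
  simpa using hpoint

theorem exists_isMOLS [Finite E] [Finite I] [Nonempty I]
    (hB : IsTransversalDifferenceFamily f B) {m n : ℕ} (hH : Nat.card H = m + 1)
    (hIH : Nat.card I * Nat.card H = n) (hE : Nat.card E = n * Nat.card H) :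
    ∃ L : Fin m → Fin n → Fin n → Fin n, IsMOLS L := by
  have : Finite H := Finite.of_surjective f hB.surjective
  have hker : Nat.card f.ker * Nat.card H = Nat.card E := by
    rw [← f.ker.card_mul_index, AddSubgroup.index_ker,
      AddMonoidHom.range_eq_top.mpr hB.surjective, AddSubgroup.card_top]
  refine (hB.isDifferenceMatrix (Classical.arbitrary I)).exists_isMOLS hH ?_ ?_
  · rw [Nat.card_prod, hIH]
  · exact Nat.eq_of_mul_eq_mul_right Nat.card_pos (hker.trans hE)

end IsTransversalDifferenceFamily

end DifferenceFamily

/-- The group `(ℤ₆₃ ⋊ ℤ₃) × ℤ₃` of order 567, written additively: the generator of the acting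
`ℤ₃` multiplies `ℤ₆₃` by `22`, an element of order 3. -/
structure TwistedGroup where
  z : ZMod 63
  s : ZMod 3
  t : ZMod 3
deriving DecidableEq

namespace TwistedGroup

/-- The action of `s : ℤ₃` on `ℤ₆₃` is multiplication by `multiplier s`. -/
def multiplier (s : ZMod 3) : ZMod 63 := 22 ^ s.val

theorem multiplier_zero : multiplier 0 = 1 := rfl

theorem multiplier_add : ∀ s s', multiplier (s + s') = multiplier s * multiplier s' := by decide

instance : Add TwistedGroup := ⟨fun x y => ⟨x.z + multiplier x.s * y.z, x.s + y.s, x.t + y.t⟩⟩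

instance : Zero TwistedGroup := ⟨⟨0, 0, 0⟩⟩

instance : Neg TwistedGroup := ⟨fun x => ⟨-(multiplier (-x.s) * x.z), -x.s, -x.t⟩⟩

theorem add_def (x y : TwistedGroup) :
    x + y = ⟨x.z + multiplier x.s * y.z, x.s + y.s, x.t + y.t⟩ := rfl

theorem zero_def : (0 : TwistedGroup) = ⟨0, 0, 0⟩ := rfl

theorem neg_def (x : TwistedGroup) : -x = ⟨-(multiplier (-x.s) * x.z), -x.s, -x.t⟩ := rfl

/-- The coordinates of an element, as an equivalence of types. -/
def equivProd : TwistedGroup ≃ ZMod 63 × ZMod 3 × ZMod 3 where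
  toFun x := (x.z, x.s, x.t)
  invFun p := ⟨p.1, p.2.1, p.2.2⟩

instance : Finite TwistedGroup := .of_equiv _ equivProd.symm

instance : AddGroup TwistedGroup :=
  AddGroup.ofLeftAxioms
    (fun x y w => by
      simp only [add_def, multiplier_add, mk.injEq]
      refine ⟨?_, ?_, ?_⟩ <;> ring)
    (fun x => by simp [add_def, zero_def, multiplier_zero])
    (fun x => by simp [add_def, zero_def, neg_def])

theorem card_eq : Nat.card TwistedGroup = 567 := by
  simp [Nat.card_congr equivProd]

theorem cast_multiplier : ∀ s, (multiplier s).cast = (1 : ZMod 3) := by decide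

/-- The homomorphism onto `ℤ₃ × ℤ₃` relative to which `baseBlock` is a difference family. -/
def toCoset : TwistedGroup →+ ZMod 3 × ZMod 3 where
  toFun x := (ZMod.castHom (show 3 ∣ 63 by decide) (ZMod 3) x.z, x.t)
  map_zero' := rfl
  map_add' x y := by simp [add_def, cast_multiplier]

end TwistedGroup

/-- Seven base blocks in `TwistedGroup`. The table lists the coordinates `(z, s)` of the point over
`h`; its coordinate `t` is `h.2`. The blocks represent the orbits of an automorphism group of a
`9 × 63` difference matrix over `ℤ₃ × ℤ₃ × ℤ₇`, and are translated so as to contain `0`. -/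
def baseBlock (i : Fin 7) (h : ZMod 3 × ZMod 3) : TwistedGroup :=
  let table : Fin 7 → ZMod 3 → ZMod 3 → ZMod 63 × ZMod 3 :=
    ![![![(0, 0), (0, 1), (27, 0)], ![(7, 2), (7, 1), (34, 1)], ![(44, 0), (23, 0), (11, 2)]],
      ![![(0, 0), (33, 0), (27, 1)], ![(61, 2), (46, 2), (1, 0)], ![(23, 2), (53, 1), (35, 1)]],
      ![![(0, 0), (9, 0), (48, 1)], ![(1, 1), (40, 0), (55, 0)], ![(11, 0), (50, 0), (2, 1)]],
      ![![(0, 0), (57, 0), (18, 1)], ![(1, 0), (52, 0), (16, 1)], ![(56, 0), (5, 1), (38, 0)]],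
      ![![(0, 0), (0, 0), (18, 2)], ![(31, 1), (43, 0), (10, 0)], ![(50, 1), (17, 2), (38, 1)]],
      ![![(0, 0), (54, 2), (60, 2)], ![(55, 1), (61, 2), (1, 1)], ![(59, 0), (50, 1), (56, 0)]],
      ![![(0, 0), (42, 2), (3, 2)], ![(16, 0), (1, 1), (22, 1)], ![(35, 2), (59, 1), (56, 1)]]]
  ⟨(table i h.1 h.2).1, (table i h.1 h.2).2, h.2⟩

theorem isTransversalDifferenceFamily_baseBlock :
    IsTransversalDifferenceFamily TwistedGroup.toCoset baseBlock where
  map_block := by decide +kernel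
  injective_sub := by decide +kernel

/-- There exist 8 mutually orthogonal Latin squares of order 63, i.e. N(63) ≥ 8. -/
theorem eight_MOLS_of_order_63 :
    ∃ L : Fin 8 → (Fin 63 → Fin 63 → Fin 63),
      (∀ k, IsLatinSquare (L k)) ∧
      (∀ k k', k ≠ k' → IsOrthogonal (L k) (L k')) := by
  exact isTransversalDifferenceFamily_baseBlock.exists_isMOLS
    (by simp) (by simp) (by rw [TwistedGroup.card_eq]; simp)
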